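/- Let p be an odd prime, q a power of p, and let P be a Sylow p-subgroup of the symplectic group Sp_6(F_q). Then the number of conjugacy classes of P equals v⁴ + 8v³ + 16v² + 9v + 1, where v = q − 1. -/

import Mathlib

/-!
In the group `Sp₂ₙ(F)` the unitriangular matrices (for a suitable order of the coordinates) form
a Sylow subgroup: they are a `p`-group, and any `g` normalizing them is triangular, so a power `q`
of the characteristic with `g ^ q = 1` forces the diagonal of `g` to be `1`; a `p`-subgroup `U`
containing every element of `p`-power order of its normalizer is Sylow.

This subgroup is `V ⋊ H`, with `V` the symmetric matrices and `H` the unitriangular group acting by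
congruence. Counting commuting pairs of `V ⋊ H` over a commuting pair of `H` is linear algebra, and
duality turns it into counting functionals on `V` fixed by the pair. Hence `k(V ⋊ H) |H|` is the sum
over functionals `φ` of `k(H_φ) |H_φ|`, where `H_φ` is the stabilizer. In odd characteristic the
functionals are again symmetric matrices `T`, with `H_T = {A | Aᵀ T A = T}`. For `n = 3`, `H` is the
Heisenberg group, and `H_T` is abelian unless `T` is supported on its last entry, when it is all
of `H`.
-/

/-! ### Class numbers of semidirect products -/

theorem natCard_conjClasses_congr {G H : Type*} [Group G] [Group H] (e : G ≃* H) :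
    Nat.card (ConjClasses G) = Nat.card (ConjClasses H) := by
  refine Nat.card_congr (Quotient.congr e.toEquiv fun a b => ?_)
  refine ⟨e.toMonoidHom.map_isConj, fun h => ?_⟩
  have hsymm : IsConj (e.symm (e a)) (e.symm (e b)) := e.symm.toMonoidHom.map_isConj h
  rwa [e.symm_apply_apply, e.symm_apply_apply] at hsymm

theorem natCard_conjClasses_mul_natCard_of_commute {G : Type*} [Group G]
    (hG : ∀ g h : G, Commute g h) : Nat.card (ConjClasses G) * Nat.card G = Nat.card G ^ 2 := by
  rw [← card_comm_eq_card_conjClasses_mul_card, sq, ← Nat.card_prod]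
  exact Nat.card_congr (Equiv.subtypeUnivEquiv fun p => hG p.1 p.2)

/-- The functionals killing the ranges of `α` and `β` form the annihilator of the range of
`(v, w) ↦ β v - α w`, whose kernel is the set on the left. -/
theorem natCard_pairs_apply_eq_apply {F V : Type*} [Field F] [AddCommGroup V] [Module F V]
    [FiniteDimensional F V] (α β : Module.End F V) :
    Nat.card {s : V × V // α s.2 = β s.1} =
      Nat.card V * Nat.card {φ : Module.Dual F V // φ ∘ₗ α = 0 ∧ φ ∘ₗ β = 0} := by
  let δ : V × V →ₗ[F] V := β.coprod (-α)
  have hker : Nat.card {s : V × V // α s.2 = β s.1} = Nat.card (LinearMap.ker δ) :=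
    Nat.card_congr <| Equiv.subtypeEquivRight fun s => by
      simp [δ, ← sub_eq_add_neg, eq_comm (a := α s.2), sub_eq_zero]
  have hann : Nat.card {φ : Module.Dual F V // φ ∘ₗ α = 0 ∧ φ ∘ₗ β = 0} =
      Nat.card (LinearMap.range δ).dualAnnihilator :=
    Nat.card_congr <| Equiv.subtypeEquivRight fun φ => by
      rw [← LinearMap.ker_dualMap_eq_dualAnnihilator_range, LinearMap.mem_ker,
        LinearMap.dualMap_apply', LinearMap.prod_ext_iff, LinearMap.comp_assoc,
        LinearMap.comp_assoc, LinearMap.coprod_inl, LinearMap.coprod_inr]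
      simp [LinearMap.comp_neg, and_comm]
  have hrank := LinearMap.finrank_range_add_finrank_ker δ
  have hdual := Subspace.finrank_add_finrank_dualAnnihilator_eq (LinearMap.range δ)
  rw [Module.finrank_prod] at hrank
  rw [hker, hann, Module.natCard_eq_pow_finrank (K := F) (V := LinearMap.ker δ),
    Module.natCard_eq_pow_finrank (K := F) (V := V),
    Module.natCard_eq_pow_finrank (K := F) (V := (LinearMap.range δ).dualAnnihilator), ← pow_add]
  congr 1
  lia

section SemidirectProduct

variable {R H V : Type*} [CommRing R] [Group H] [AddCommGroup V] [Module R V]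

/-- The action of `H` on the underlying group of a representation `V`, with `V` written
multiplicatively so that the semidirect product `V ⋊ H` can be formed. -/
def mulAutOfRepresentation (ρ : Representation R H V) : H →* MulAut (Multiplicative V) :=
  (MulAutMultiplicative V).symm.toMonoidHom.comp
    ((DistribMulAction.toAddAut (Module.End R V)ˣ V).comp ρ.toHomUnits)

@[simp]
theorem mulAutOfRepresentation_apply (ρ : Representation R H V) (h : H) (v : Multiplicative V) :
    mulAutOfRepresentation ρ h v = Multiplicative.ofAdd (ρ h v.toAdd) :=
  rfl

/-- The stabilizer of a functional `φ` under the contragredient of the representation `ρ`. -/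
def dualStabilizer (ρ : Representation R H V) (φ : Module.Dual R V) : Subgroup H where
  carrier := {h | φ ∘ₗ ρ h = φ}
  one_mem' := by simp [Module.End.one_eq_id]
  mul_mem' {g h} hg hh := by
    rw [Set.mem_ofPred_eq, map_mul, Module.End.mul_eq_comp, ← LinearMap.comp_assoc, hg, hh]
  inv_mem' {h} hh := by
    rw [Set.mem_ofPred_eq]
    conv_lhs => rw [← hh]
    rw [LinearMap.comp_assoc, ← Module.End.mul_eq_comp, ← map_mul, mul_inv_cancel, map_one,
      Module.End.one_eq_id, LinearMap.comp_id]

@[simp]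
theorem mem_dualStabilizer {ρ : Representation R H V} {φ : Module.Dual R V} {h : H} :
    h ∈ dualStabilizer ρ φ ↔ φ ∘ₗ ρ h = φ :=
  Iff.rfl

theorem mem_dualStabilizer_iff_comp_sub_one {ρ : Representation R H V} {φ : Module.Dual R V}
    {h : H} : h ∈ dualStabilizer ρ φ ↔ φ ∘ₗ (ρ h - 1) = 0 := by
  rw [mem_dualStabilizer, LinearMap.comp_sub, sub_eq_zero, Module.End.one_eq_id, LinearMap.comp_id]

variable (ρ : Representation R H V)

theorem commute_semidirectProduct_iff {g g' : Multiplicative V ⋊[mulAutOfRepresentation ρ] H} :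
    Commute g g' ↔ Commute g.right g'.right ∧
      (ρ g.right - 1) g'.left.toAdd = (ρ g'.right - 1) g.left.toAdd := by
  have hleft : (g * g').left = (g' * g).left ↔
      (ρ g.right - 1) g'.left.toAdd = (ρ g'.right - 1) g.left.toAdd := by
    rw [← Multiplicative.toAdd.injective.eq_iff]
    simp only [SemidirectProduct.mul_left, mulAutOfRepresentation_apply, toAdd_mul, toAdd_ofAdd,
      LinearMap.sub_apply, Module.End.one_apply, sub_eq_sub_iff_add_eq_add]
    rw [add_comm, add_comm g'.left.toAdd]
  rw [commute_iff_eq, SemidirectProduct.ext_iff, hleft, and_comm, commute_iff_eq,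
    SemidirectProduct.mul_right, SemidirectProduct.mul_right]

/-- Commuting pairs of `V ⋊ H`, fibred over their images in `H`. -/
def commutingPairsEquivSigma :
    {p : (Multiplicative V ⋊[mulAutOfRepresentation ρ] H) ×
        (Multiplicative V ⋊[mulAutOfRepresentation ρ] H) // Commute p.1 p.2} ≃
      Σ h : {h : H × H // Commute h.1 h.2},
        {s : V × V // (ρ h.1.1 - 1) s.2 = (ρ h.1.2 - 1) s.1} where
  toFun p := ⟨⟨(p.1.1.right, p.1.2.right), ((commute_semidirectProduct_iff ρ).1 p.2).1⟩,
    (p.1.1.left.toAdd, p.1.2.left.toAdd), ((commute_semidirectProduct_iff ρ).1 p.2).2⟩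
  invFun s := ⟨(⟨.ofAdd s.2.1.1, s.1.1.1⟩, ⟨.ofAdd s.2.1.2, s.1.1.2⟩),
    (commute_semidirectProduct_iff ρ).2 ⟨s.1.2, s.2.2⟩⟩
  left_inv _ := rfl
  right_inv _ := rfl

/-- Commuting pairs of `H` with a functional fixed by both, fibred over `H × H` or over the dual. -/
def commutingPairsFixedEquivSigma :
    (Σ h : {h : H × H // Commute h.1 h.2},
      {φ : Module.Dual R V // φ ∘ₗ (ρ h.1.1 - 1) = 0 ∧ φ ∘ₗ (ρ h.1.2 - 1) = 0}) ≃
    Σ φ : Module.Dual R V,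
      {h : dualStabilizer ρ φ × dualStabilizer ρ φ // Commute h.1 h.2} where
  toFun s := ⟨s.2.1, (⟨s.1.1.1, mem_dualStabilizer_iff_comp_sub_one.2 s.2.2.1⟩,
    ⟨s.1.1.2, mem_dualStabilizer_iff_comp_sub_one.2 s.2.2.2⟩), Subtype.ext s.1.2⟩
  invFun s := ⟨⟨(s.2.1.1, s.2.1.2), congrArg Subtype.val s.2.2⟩, s.1,
    mem_dualStabilizer_iff_comp_sub_one.1 s.2.1.1.2,
    mem_dualStabilizer_iff_comp_sub_one.1 s.2.1.2.2⟩
  left_inv _ := rfl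
  right_inv _ := rfl

theorem natCard_conjClasses_semidirectProduct_mul_natCard {F V : Type*} [Field F] [Finite F]
    [AddCommGroup V] [Module F V] [FiniteDimensional F V] [Finite H] (ρ : Representation F H V) :
    Nat.card (ConjClasses (Multiplicative V ⋊[mulAutOfRepresentation ρ] H)) * Nat.card H =
      ∑ᶠ φ : Module.Dual F V,
        Nat.card (ConjClasses (dualStabilizer ρ φ)) * Nat.card (dualStabilizer ρ φ) := by
  have : Finite V := Module.finite_of_finite F
  have : Finite (Module.Dual F V) := Module.finite_of_finite F
  have := Fintype.ofFinite (Module.Dual F V)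
  have := Fintype.ofFinite {h : H × H // Commute h.1 h.2}
  have hcard : Nat.card V * (Nat.card (ConjClasses (Multiplicative V ⋊[mulAutOfRepresentation ρ] H))
      * Nat.card H) = Nat.card V * ∑ φ : Module.Dual F V,
        Nat.card (ConjClasses (dualStabilizer ρ φ)) * Nat.card (dualStabilizer ρ φ) := by
    calc
      _ = Nat.card {p : (Multiplicative V ⋊[mulAutOfRepresentation ρ] H) ×
            (Multiplicative V ⋊[mulAutOfRepresentation ρ] H) // Commute p.1 p.2} := by
        rw [card_comm_eq_card_conjClasses_mul_card, SemidirectProduct.card,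
          Nat.card_congr Multiplicative.toAdd]
        ring
      _ = ∑ h : {h : H × H // Commute h.1 h.2}, Nat.card V * Nat.card
            {φ : Module.Dual F V // φ ∘ₗ (ρ h.1.1 - 1) = 0 ∧ φ ∘ₗ (ρ h.1.2 - 1) = 0} := by
        rw [Nat.card_congr (commutingPairsEquivSigma ρ), Nat.card_sigma]
        exact Finset.sum_congr rfl fun h _ => natCard_pairs_apply_eq_apply _ _
      _ = Nat.card V * Nat.card (Σ φ : Module.Dual F V,
            {h : dualStabilizer ρ φ × dualStabilizer ρ φ // Commute h.1 h.2}) := by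
        rw [← Finset.mul_sum, ← Nat.card_sigma, Nat.card_congr (commutingPairsFixedEquivSigma ρ)]
      _ = _ := by
        simp only [Nat.card_sigma, card_comm_eq_card_conjClasses_mul_card]
  rw [finsum_eq_sum_of_fintype]
  exact Nat.eq_of_mul_eq_mul_left Nat.card_pos hcard

end SemidirectProduct

/-! ### Unitriangular matrices -/

section Unitriangular

variable {ι α R : Type*} [LinearOrder α] [DecidableEq ι] [CommRing R] {b : ι → α}

/-- `M` is upper unitriangular for the ordering of its indices by `b`: it is block triangular with
identity diagonal blocks. -/
def IsUnitriangular (b : ι → α) (M : Matrix ι ι R) : Prop :=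
  ∀ ⦃i j⦄, b j ≤ b i → M i j = (1 : Matrix ι ι R) i j

theorem isUnitriangular_transvection {i j : ι}
    (hij : b i < b j) (c : R) : IsUnitriangular b (Matrix.transvection i j c) := by
  intro i' j' h
  simp only [Matrix.transvection, Matrix.add_apply, Matrix.single_apply, add_eq_left,
    ite_eq_right_iff]
  rintro ⟨rfl, rfl⟩
  exact absurd h hij.not_ge

theorem transvection_row (i j : ι) (c : R) :
    Matrix.transvection i j c i = Pi.single i 1 + Pi.single j c := by
  ext k
  simp [Matrix.transvection, Matrix.one_apply, Matrix.single_apply, Pi.single_apply, eq_comm]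

namespace IsUnitriangular

variable {M N : Matrix ι ι R}

theorem one (b : ι → α) : IsUnitriangular b (1 : Matrix ι ι R) :=
  fun _ _ _ => rfl

theorem blockTriangular (hM : IsUnitriangular b M) : M.BlockTriangular b :=
  fun _ _ hij => (hM hij.le).trans (Matrix.one_apply_ne fun h => hij.ne (congrArg b h).symm)

theorem toSquareBlock_eq_one (hM : IsUnitriangular b M) (a : α) : M.toSquareBlock b a = 1 := by
  ext i j
  rw [Matrix.toSquareBlock_def, Matrix.of_apply, hM (j.2.trans i.2.symm).le]
  simp only [Matrix.one_apply, Subtype.ext_iff]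

variable [Fintype ι]

theorem mul_apply (hM : IsUnitriangular b M) (hN : N.BlockTriangular b) {i j : ι}
    (hij : b j ≤ b i) : (M * N) i j = N i j := by
  have hterm (k : ι) : M i k * N k j = (1 : Matrix ι ι R) i k * N k j := by
    rcases le_or_gt (b k) (b i) with hk | hk
    · rw [hM hk]
    · rw [hN (hij.trans_lt hk), mul_zero, mul_zero]
  rw [Matrix.mul_apply, Finset.sum_congr rfl fun k _ => hterm k, ← Matrix.mul_apply, Matrix.one_mul]

theorem mul (hM : IsUnitriangular b M) (hN : IsUnitriangular b N) : IsUnitriangular b (M * N) :=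
  fun _ _ hij => (hM.mul_apply hN.blockTriangular hij).trans (hN hij)

theorem inv {g : GL ι R} (hg : IsUnitriangular b g.val) : IsUnitriangular b (g⁻¹).val := by
  have hinv : (g⁻¹).val.BlockTriangular b := by
    have := g.invertible
    rw [Matrix.coe_units_inv]
    exact Matrix.blockTriangular_inv_of_blockTriangular hg.blockTriangular
  intro i j hij
  rw [← hg.mul_apply hinv hij, ← Units.val_mul, mul_inv_cancel, Units.val_one]

theorem isNilpotent_sub_one (hM : IsUnitriangular b M) : IsNilpotent (M - 1) := by
  have hcharpoly : M.charpoly =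
      (Polynomial.X - 1) ^ ∑ a ∈ Finset.univ.image b, Fintype.card {i // b i = a} := by
    rw [hM.blockTriangular.charpoly, ← Finset.prod_pow_eq_pow_sum]
    exact Finset.prod_congr rfl fun a _ => by
      rw [hM.toSquareBlock_eq_one, Matrix.charpoly_one]
  have hcayleyHamilton := Matrix.aeval_self_charpoly M
  rw [hcharpoly, map_pow, map_sub, Polynomial.aeval_X, map_one] at hcayleyHamilton
  exact ⟨_, hcayleyHamilton⟩

end IsUnitriangular

variable [Fintype ι]

/-- The group of upper unitriangular matrices with respect to the ordering of indices by `b`. -/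
def unitriangularGroup (R : Type*) [CommRing R] (b : ι → α) : Subgroup (GL ι R) where
  carrier := {g | IsUnitriangular b g.val}
  one_mem' := .one b
  mul_mem' := .mul
  inv_mem' := .inv

@[simp]
theorem mem_unitriangularGroup {g : GL ι R} :
    g ∈ unitriangularGroup R b ↔ IsUnitriangular b g.val :=
  Iff.rfl

theorem isPGroup_unitriangularGroup (p : ℕ) [Fact p.Prime] [CharP R p] (b : ι → α) :
    IsPGroup p (unitriangularGroup R b) := by
  cases isEmpty_or_nonempty ι
  · exact fun _ => ⟨0, Subsingleton.elim _ _⟩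
  rintro ⟨g, hg⟩
  obtain ⟨n, hn⟩ := hg.isNilpotent_sub_one
  have hpow : (g.val - 1) ^ p ^ n = 0 :=
    pow_eq_zero_of_le (Nat.lt_pow_self (Fact.out : p.Prime).one_lt).le hn
  rw [sub_pow_char_pow_of_commute _ _ (Commute.one_right _), one_pow, sub_eq_zero] at hpow
  exact ⟨n, Subtype.ext <| Units.ext <| by simpa using hpow⟩

theorem blockTriangular_pow_apply_self {M : Matrix ι ι R} (hM : M.BlockTriangular b)
    (hb : Function.Injective b) (k : ℕ) (i : ι) : (M ^ k) i i = M i i ^ k := by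
  induction k with
  | zero => simp
  | succ k ih =>
    rw [pow_succ, Matrix.mul_apply, Finset.sum_eq_single i _ (by simp), ih, pow_succ]
    intro j _ hj
    rcases (hb.ne hj).lt_or_gt with hlt | hlt
    · rw [hM.pow k hlt, zero_mul]
    · rw [hM hlt, mul_zero]

theorem isUnitriangular_of_pow_char_pow_eq_one [IsReduced R] {p : ℕ} [Fact p.Prime] [CharP R p]
    {M : Matrix ι ι R} (hM : M.BlockTriangular b) (hb : Function.Injective b) {k : ℕ}
    (hpow : M ^ p ^ k = 1) : IsUnitriangular b M := by
  intro i j hij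
  rcases hij.lt_or_eq with hlt | heq
  · rw [hM hlt, Matrix.one_apply_ne fun h => hlt.ne (congrArg b h).symm]
  · obtain rfl := hb heq
    have hdiag : M j j ^ p ^ k = 1 := by
      rw [← blockTriangular_pow_apply_self hM hb, hpow, Matrix.one_apply_eq]
    rw [Matrix.one_apply_eq]
    exact iterateFrobenius_inj R p k (by simpa [iterateFrobenius_def] using hdiag)

/-- Columns are treated in increasing order: once the columns before `j` are known to be
triangular, comparing the `(j, j)` entries of `M * g = g * N` yields `g i j = 0`. -/
theorem blockTriangular_of_mul_eq_mul [WellFoundedLT α] {g : Matrix ι ι R}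
    (h : ∀ ⦃j i⦄, b j < b i → ∃ M N : Matrix ι ι R,
      M j = Pi.single j 1 + Pi.single i 1 ∧ IsUnitriangular b N ∧ M * g = g * N) :
    g.BlockTriangular b := by
  suffices hcol : ∀ a i j, b j = a → b j < b i → g i j = 0 from fun i j => hcol _ i j rfl
  intro a
  induction a using WellFoundedLT.induction with
  | ind a ih =>
    rintro i j rfl hij
    obtain ⟨M, N, hM, hN, hMN⟩ := h hij
    have hleft : (M * g) j j = g j j + g i j := by
      rw [Matrix.mul_apply_eq_vecMul, hM, Matrix.add_vecMul]
      simp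
    have hright : (g * N) j j = g j j := by
      rw [Matrix.mul_apply, Finset.sum_eq_single j _ (by simp), hN le_rfl, Matrix.one_apply_eq,
        mul_one]
      intro k _ hk
      rcases lt_or_ge (b k) (b j) with hlt | hle
      · rw [ih (b k) hlt j k rfl hlt, zero_mul]
      · rw [hN hle, Matrix.one_apply_ne hk, mul_zero]
    rw [hMN, hright] at hleft
    simpa using hleft

end Unitriangular

/-! ### Self-normalizing `p`-subgroups -/

/-- A Sylow subgroup containing `U` is nilpotent, so there `U` is either everything or strictly
smaller than its normalizer. -/
theorem exists_sylow_eq_of_normalizer {G : Type*} [Group G] [Finite G] {p : ℕ} [Fact p.Prime]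
    {U : Subgroup G} (hU : IsPGroup p U)
    (h : ∀ g ∈ Subgroup.normalizer (U : Set G), ∀ k, g ^ p ^ k = 1 → g ∈ U) :
    ∃ Q : Sylow p G, (Q : Subgroup G) = U := by
  obtain ⟨Q, hUQ⟩ := hU.exists_le_sylow
  refine ⟨Q, le_antisymm ?_ hUQ⟩
  have := Q.isPGroup'.isNilpotent
  have hself : Subgroup.normalizer (U.subgroupOf Q : Set Q) = U.subgroupOf Q := by
    rw [← Subgroup.subgroupOf_normalizer_eq hUQ]
    refine le_antisymm (fun g hg => ?_) (Subgroup.comap_mono Subgroup.le_normalizer)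
    obtain ⟨k, hk⟩ := Q.isPGroup' g
    exact h g hg k (congrArg Subtype.val hk)
  rw [← Subgroup.subgroupOf_eq_top]
  exact normalizerCondition_iff_only_full_group_self_normalizing.1
    Group.normalizerCondition_of_isNilpotent _ hself

/-! ### The unitriangular Sylow subgroup of the symplectic group -/

section Symplectic

variable {l R : Type*}

/-- The indices of `2n × 2n` symplectic matrices ordered `1 < ⋯ < n < n' < ⋯ < 1'`. With the
second half reversed, the upper unitriangular symplectic matrices are a maximal unipotent subgroup.
-/
def symplecticOrder (l : Type*) : l ⊕ l → l ⊕ₗ lᵒᵈ :=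
  toLex ∘ Sum.map id OrderDual.toDual

theorem symplecticOrder_injective : Function.Injective (symplecticOrder l) :=
  toLex.injective.comp (Function.injective_id.sumMap OrderDual.toDual.injective)

variable [LinearOrder l] [CommRing R]

theorem isUnitriangular_fromBlocks_iff {A B C D : Matrix l l R} :
    IsUnitriangular (symplecticOrder l) (Matrix.fromBlocks A B C D) ↔
      IsUnitriangular id A ∧ C = 0 ∧ IsUnitriangular OrderDual.toDual D := by
  simp only [IsUnitriangular, symplecticOrder, Sum.forall, Function.comp_apply, Sum.map_inl,
    Sum.map_inr, Sum.Lex.inl_le_inl_iff, Sum.Lex.inr_le_inr_iff, Sum.Lex.inl_le_inr,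
    Sum.Lex.not_inr_le_inl, Matrix.fromBlocks_apply₁₁, Matrix.fromBlocks_apply₂₁,
    Matrix.fromBlocks_apply₂₂, Matrix.one_apply, Sum.inl.injEq, Sum.inr.injEq, reduceCtorEq,
    false_imp_iff, forall_const, forall_and, ← Matrix.ext_iff,
    if_false, Matrix.zero_apply]
  tauto

variable [Fintype l]

/-- The upper unitriangular matrices in the symplectic group, for `symplecticOrder`. -/
def symplecticUnitriangular (l R : Type*) [LinearOrder l] [Fintype l] [CommRing R] :
    Subgroup (Matrix.symplecticGroup l R) :=
  (unitriangularGroup R (symplecticOrder l)).comap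
    (Matrix.symplecticGroup l R).subtype.toHomUnits

@[simp]
theorem mem_symplecticUnitriangular {M : Matrix.symplecticGroup l R} :
    M ∈ symplecticUnitriangular l R ↔ IsUnitriangular (symplecticOrder l) M.val :=
  Iff.rfl

theorem isPGroup_symplecticUnitriangular (p : ℕ) [Fact p.Prime] [CharP R p] :
    IsPGroup p (symplecticUnitriangular l R) :=
  (isPGroup_unitriangularGroup p _).comap_of_injective _ fun _ _ h =>
    Subtype.ext (congrArg Units.val h)

theorem fromBlocks_transvection_mem_symplecticGroup {i j : l} (hij : i ≠ j) (c : R) :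
    Matrix.fromBlocks (Matrix.transvection i j c) 0 0 (Matrix.transvection j i (-c)) ∈
      Matrix.symplecticGroup l R := by
  have htranspose : (Matrix.transvection i j c).transpose = Matrix.transvection j i c := by
    simp [Matrix.transvection]
  rw [SymplecticGroup.fromBlocks_mem_iff, htranspose,
    Matrix.transvection_mul_transvection_same _ _ hij.symm]
  simp

theorem fromBlocks_one_mem_symplecticGroup {S : Matrix l l R} (hS : S.IsSymm) :
    Matrix.fromBlocks 1 S 0 1 ∈ Matrix.symplecticGroup l R := by
  rw [SymplecticGroup.fromBlocks_mem_iff, hS.eq]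
  simp

/-- The matrices `M` are elements of the positive root subgroups. -/
theorem exists_mem_symplecticUnitriangular_row {i j : l ⊕ l}
    (hij : symplecticOrder l i < symplecticOrder l j) :
    ∃ M ∈ symplecticUnitriangular l R, M.val i = Pi.single i 1 + Pi.single j 1 := by
  have hlevi {i j : l} (hij : i < j) (c : R) :
      ⟨_, fromBlocks_transvection_mem_symplecticGroup hij.ne c⟩ ∈ symplecticUnitriangular l R :=
    isUnitriangular_fromBlocks_iff.2
      ⟨isUnitriangular_transvection hij c, rfl, isUnitriangular_transvection hij (-c)⟩
  rcases i with i | i <;> rcases j with j | j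
  · refine ⟨_, hlevi (Sum.Lex.inl_lt_inl_iff.1 hij) 1, ?_⟩
    ext (k | k) <;> simp [transvection_row, Pi.single_apply]
  · let S : Matrix l l R := .of fun a b => if a = i ∧ b = j ∨ a = j ∧ b = i then 1 else 0
    have hS : S.IsSymm := Matrix.IsSymm.ext fun a b => by simp only [S, Matrix.of_apply]; grind
    refine ⟨⟨_, fromBlocks_one_mem_symplecticGroup hS⟩,
      isUnitriangular_fromBlocks_iff.2 ⟨.one _, rfl, .one _⟩, ?_⟩
    ext (k | k)
    · simp [Matrix.one_apply, Pi.single_apply, eq_comm]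
    · simp only [S, Matrix.fromBlocks_apply₁₂, Matrix.of_apply, true_and, Pi.add_apply,
        Pi.single_apply, reduceCtorEq, if_false, Sum.inr.injEq, zero_add]
      grind
  · exact absurd hij Sum.Lex.not_inr_lt_inl
  · refine ⟨_, hlevi (OrderDual.toDual_lt_toDual.1 (Sum.Lex.inr_lt_inr_iff.1 hij)) (-1), ?_⟩
    ext (k | k) <;> simp [transvection_row, Pi.single_apply]

theorem mem_symplecticUnitriangular_of_mem_normalizer [IsReduced R] {p : ℕ} [Fact p.Prime]
    [CharP R p] {g : Matrix.symplecticGroup l R}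
    (hg : g ∈ Subgroup.normalizer (symplecticUnitriangular l R : Set (Matrix.symplecticGroup l R)))
    {k : ℕ} (hpow : g ^ p ^ k = 1) : g ∈ symplecticUnitriangular l R := by
  refine isUnitriangular_of_pow_char_pow_eq_one (blockTriangular_of_mul_eq_mul fun i j hij => ?_)
    symplecticOrder_injective (congrArg Subtype.val hpow)
  obtain ⟨M, hM, hrow⟩ := exists_mem_symplecticUnitriangular_row (R := R) hij
  exact ⟨M.val, (g⁻¹ * M * g).val, hrow, (Subgroup.mem_normalizer_iff''.1 hg M).1 hM,
    congrArg Subtype.val (by group : M * g = g * (g⁻¹ * M * g))⟩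

theorem nonempty_sylow_mulEquiv_symplecticUnitriangular [Finite R] [IsReduced R] {p : ℕ}
    [Fact p.Prime] [CharP R p] (P : Sylow p (Matrix.symplecticGroup l R)) :
    Nonempty (P ≃* symplecticUnitriangular l R) := by
  have : Finite (Matrix.symplecticGroup l R) := Subtype.finite
  obtain ⟨Q, hQ⟩ := exists_sylow_eq_of_normalizer
    (isPGroup_symplecticUnitriangular (l := l) (R := R) p)
    fun _ hg _ hpow => mem_symplecticUnitriangular_of_mem_normalizer hg hpow
  exact ⟨(P.equiv Q).trans (MulEquiv.subgroupCongr hQ)⟩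

end Symplectic

/-! ### The Siegel parametrization -/

section Siegel

variable {l R : Type*} [Fintype l] [DecidableEq l] [CommRing R]

/-- The module of symmetric `l × l` matrices. -/
def symmMatrices (l R : Type*) [CommRing R] : Submodule R (Matrix l l R) where
  carrier := {S | S.IsSymm}
  zero_mem' := Matrix.isSymm_zero
  add_mem' := Matrix.IsSymm.add
  smul_mem' c _ hS := hS.smul c

/-- The representation of a group `K` of invertible matrices on symmetric matrices by congruence,
`A • S = A S Aᵀ`. -/
def congruenceRepresentation (K : Subgroup (GL l R)) : Representation R K (symmMatrices l R) where
  toFun A :=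
    { toFun S := ⟨A.val.val * S.val * A.val.val.transpose, by
        have hS : S.val.transpose = S.val := S.2
        change (_ * _ * _ : Matrix l l R).transpose = _
        rw [Matrix.transpose_mul, Matrix.transpose_mul, Matrix.transpose_transpose, hS,
          Matrix.mul_assoc]⟩
      map_add' S T := Subtype.ext <| by simp [Matrix.mul_add, Matrix.add_mul]
      map_smul' c S := Subtype.ext <| by simp }
  map_one' := LinearMap.ext fun S => Subtype.ext <| by simp
  map_mul' A B := LinearMap.ext fun S => Subtype.ext <| by simp [Matrix.mul_assoc]

@[simp]
theorem coe_congruenceRepresentation_apply {K : Subgroup (GL l R)} (A : K)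
    (S : symmMatrices l R) :
    (congruenceRepresentation K A S : Matrix l l R) = A.val.val * S * A.val.val.transpose :=
  rfl

/-- The semidirect product of the symmetric matrices with `K` acting by congruence. -/
abbrev SiegelGroup (K : Subgroup (GL l R)) : Type _ :=
  Multiplicative (symmMatrices l R) ⋊[mulAutOfRepresentation (congruenceRepresentation K)] K

theorem transpose_mul_transpose_inv (A : GL l R) :
    A.val.transpose * (A⁻¹).val.transpose = 1 := by
  rw [← Matrix.transpose_mul, ← Units.val_mul, inv_mul_cancel, Units.val_one, Matrix.transpose_one]

theorem siegel_mem_symplecticGroup (A : GL l R) {S : Matrix l l R} (hS : S.IsSymm) :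
    Matrix.fromBlocks A.val (S * (A⁻¹).val.transpose) 0 (A⁻¹).val.transpose ∈
      Matrix.symplecticGroup l R := by
  rw [SymplecticGroup.fromBlocks_mem_iff, Matrix.transpose_mul, hS.eq, Matrix.mul_assoc,
    transpose_mul_transpose_inv]
  simp

/-- The parametrization `(S, A) ↦ [[A, S A⁻ᵀ], [0, A⁻ᵀ]]` of the part of the Siegel parabolic
subgroup of the symplectic group with Levi components in `K`. -/
def siegelHom (K : Subgroup (GL l R)) :
    SiegelGroup K →* Matrix.symplecticGroup l R where
  toFun x := ⟨_, siegel_mem_symplecticGroup x.right.val x.left.toAdd.2⟩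
  map_one' := Subtype.ext <| by simp
  map_mul' x y := Subtype.ext <| by
    have hcancel (N : Matrix l l R) :
        x.right.val.val.transpose * ((x.right.val⁻¹).val.transpose * N) = N := by
      rw [← Matrix.mul_assoc, transpose_mul_transpose_inv, Matrix.one_mul]
    simp only [SemidirectProduct.mul_left, SemidirectProduct.mul_right, Submonoid.coe_mul,
      mulAutOfRepresentation_apply, toAdd_mul, toAdd_ofAdd, Submodule.coe_add, Subgroup.coe_mul,
      coe_congruenceRepresentation_apply, mul_inv_rev, Units.val_mul, Matrix.transpose_mul,
      Matrix.fromBlocks_multiply, Matrix.add_mul, Matrix.mul_assoc, hcancel, Matrix.mul_zero,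
      Matrix.zero_mul, add_zero, add_comm]

@[simp]
theorem coe_siegelHom_apply {K : Subgroup (GL l R)} (x : SiegelGroup K) :
    (siegelHom K x : Matrix (l ⊕ l) (l ⊕ l) R) =
      Matrix.fromBlocks x.right.val.val (x.left.toAdd.val * (x.right.val⁻¹).val.transpose) 0
        (x.right.val⁻¹).val.transpose :=
  rfl

theorem siegelHom_injective (K : Subgroup (GL l R)) : Function.Injective (siegelHom K) := by
  intro x y hxy
  have hblocks := congrArg Subtype.val hxy
  rw [coe_siegelHom_apply, coe_siegelHom_apply, Matrix.fromBlocks_inj] at hblocks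
  obtain ⟨hA, hB, -, -⟩ := hblocks
  have hright : x.right = y.right := Subtype.ext (Units.ext hA)
  refine SemidirectProduct.ext (Multiplicative.toAdd.injective (Subtype.ext ?_)) hright
  rw [hright] at hB
  have hcancel := congrArg (· * y.right.val.val.transpose) hB
  simpa only [Matrix.mul_assoc, ← Matrix.transpose_mul, ← Units.val_mul, mul_inv_cancel,
    Units.val_one, Matrix.transpose_one, Matrix.mul_one] using hcancel

theorem isUnitriangular_transpose_inv {α : Type*} [LinearOrder α] {b : l → α} {A : GL l R}
    (hA : IsUnitriangular b A.val) :
    IsUnitriangular (OrderDual.toDual ∘ b) (A⁻¹).val.transpose := by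
  intro i j hij
  rw [Matrix.transpose_apply, hA.inv (OrderDual.toDual_le_toDual.1 hij), ← Matrix.transpose_apply 1,
    Matrix.transpose_one]

end Siegel

section SiegelUnitriangular

variable {l R : Type*} [LinearOrder l] [Fintype l] [CommRing R]

theorem siegelHom_mem_symplecticUnitriangular
    (x : SiegelGroup (unitriangularGroup R (id : l → l))) :
    siegelHom _ x ∈ symplecticUnitriangular l R :=
  isUnitriangular_fromBlocks_iff.2
    ⟨x.right.2, rfl, isUnitriangular_transpose_inv (b := id) x.right.2⟩

theorem exists_siegelHom_eq {M : Matrix.symplecticGroup l R}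
    (hM : M ∈ symplecticUnitriangular l R) :
    ∃ x, siegelHom (unitriangularGroup R (id : l → l)) x = M := by
  obtain ⟨A, B, C, D, hblocks⟩ : ∃ A B C D, M.val = Matrix.fromBlocks A B C D :=
    ⟨_, _, _, _, (Matrix.fromBlocks_toBlocks M.val).symm⟩
  have hSp := M.2
  rw [mem_symplecticUnitriangular, hblocks, isUnitriangular_fromBlocks_iff] at hM
  obtain ⟨hA, rfl, -⟩ := hM
  rw [hblocks, SymplecticGroup.fromBlocks_mem_iff, Matrix.transpose_zero,
    Matrix.zero_mul B, sub_zero] at hSp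
  obtain ⟨-, hBD, hAD⟩ := hSp
  have hDA : D.transpose * A = 1 := by
    rw [← Matrix.transpose_inj, Matrix.transpose_mul, Matrix.transpose_transpose, hAD,
      Matrix.transpose_one]
  have hAD' : A * D.transpose = 1 := mul_eq_one_comm.1 hDA
  have hDA' : D * A.transpose = 1 := mul_eq_one_comm.1 hAD
  let g : GL l R := ⟨A, D.transpose, hAD', hDA⟩
  have hS : (B * A.transpose).IsSymm := by
    calc (B * A.transpose).transpose = A * (B.transpose * D) * A.transpose := by
          simp only [Matrix.transpose_mul, Matrix.transpose_transpose, Matrix.mul_assoc, hDA',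
            Matrix.mul_one]
      _ = B * A.transpose := by
          rw [hBD, ← Matrix.mul_assoc, hAD', Matrix.one_mul]
  refine ⟨⟨.ofAdd ⟨B * A.transpose, hS⟩, ⟨g, hA⟩⟩, Subtype.ext ?_⟩
  have hright : B * A.transpose * D = B := by rw [Matrix.mul_assoc, hAD, Matrix.mul_one]
  rw [coe_siegelHom_apply, hblocks]
  simp [g, hright]

/-- The unitriangular symplectic group is the semidirect product of the symmetric matrices with the
unitriangular group. -/
noncomputable def siegelEquiv :
    SiegelGroup (unitriangularGroup R (id : l → l)) ≃* symplecticUnitriangular l R :=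
  MulEquiv.ofBijective
    ((siegelHom _).codRestrict (symplecticUnitriangular l R) siegelHom_mem_symplecticUnitriangular)
    ⟨fun _ _ h => siegelHom_injective _ (congrArg Subtype.val h), fun M =>
      (exists_siegelHom_eq M.2).imp fun _ h => Subtype.ext h⟩

end SiegelUnitriangular

section TraceForm

variable {l R : Type*} [Fintype l] [CommRing R]

/-- The trace form `(T, S) ↦ tr (T S)` on symmetric matrices, as a map to the dual space. -/
def symmTraceForm (l R : Type*) [Fintype l] [CommRing R] :
    symmMatrices l R →ₗ[R] Module.Dual R (symmMatrices l R) :=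
  ((LinearMap.mul R (Matrix l l R)).compr₂ (Matrix.traceLinearMap l R R)).domRestrict₁₂ _ _

@[simp]
theorem symmTraceForm_apply_apply (T S : symmMatrices l R) :
    symmTraceForm l R T S = Matrix.trace (T.val * S.val) :=
  rfl

theorem symmTraceForm_injective [NoZeroDivisors R] (h2 : (2 : R) ≠ 0) :
    Function.Injective (symmTraceForm l R) := by
  classical
  rw [injective_iff_map_eq_zero]
  refine fun T hT => Subtype.ext <| Matrix.ext fun i j => ?_
  have hTij : T.val j i = T.val i j := T.2.apply i j
  have hS : (Matrix.single i j (1 : R) + Matrix.single j i 1).IsSymm := by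
    rw [← Matrix.transpose_single i j]
    exact Matrix.isSymm_add_transpose_self _
  have htest : symmTraceForm l R T ⟨_, hS⟩ = 2 * T.val i j := by
    simp [Matrix.mul_add, Matrix.trace_mul_single, hTij, two_mul]
  rw [hT, LinearMap.zero_apply, eq_comm, mul_eq_zero_iff_left h2] at htest
  exact htest

section FormStabilizer

variable [DecidableEq l]

/-- The isotropy group in `K` of the symmetric matrix `T`, seen as a functional through the trace
form. -/
abbrev formStabilizer (K : Subgroup (GL l R)) (T : symmMatrices l R) : Subgroup K :=
  dualStabilizer (congruenceRepresentation K) (symmTraceForm l R T)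

theorem mem_formStabilizer_iff [NoZeroDivisors R] (h2 : (2 : R) ≠ 0) {K : Subgroup (GL l R)}
    {T : symmMatrices l R} {A : K} :
    A ∈ formStabilizer K T ↔ A.val.val.transpose * T.val * A.val.val = T.val := by
  have hT : (A.val.val.transpose * T.val * A.val.val).IsSymm := by
    have hT : T.val.transpose = T.val := T.2
    rw [Matrix.IsSymm, Matrix.transpose_mul, Matrix.transpose_mul, Matrix.transpose_transpose, hT,
      Matrix.mul_assoc]
  have hcomp : symmTraceForm l R T ∘ₗ congruenceRepresentation K A =
      symmTraceForm l R ⟨_, hT⟩ := by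
    refine LinearMap.ext fun S => ?_
    rw [LinearMap.comp_apply, symmTraceForm_apply_apply, coe_congruenceRepresentation_apply,
      symmTraceForm_apply_apply, ← Matrix.mul_assoc, Matrix.trace_mul_comm]
    simp only [Matrix.mul_assoc]
  rw [mem_dualStabilizer, hcomp, (symmTraceForm_injective h2).eq_iff, Subtype.ext_iff]

end FormStabilizer

end TraceForm

section TraceDual

variable {l F : Type*} [Fintype l] [Field F]

/-- The trace form identifies the symmetric matrices with their dual space. -/
noncomputable def symmTraceDualEquiv (h2 : (2 : F) ≠ 0) :
    symmMatrices l F ≃ₗ[F] Module.Dual F (symmMatrices l F) :=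
  LinearMap.linearEquivOfInjective (symmTraceForm l F) (symmTraceForm_injective h2)
    Subspace.dual_finrank_eq.symm

theorem natCard_conjClasses_siegelGroup_mul_natCard [DecidableEq l] [Finite F] (h2 : (2 : F) ≠ 0)
    (K : Subgroup (GL l F)) :
    Nat.card (ConjClasses (SiegelGroup K)) * Nat.card K =
      ∑ᶠ T : symmMatrices l F,
        Nat.card (ConjClasses (formStabilizer K T)) * Nat.card (formStabilizer K T) := by
  rw [natCard_conjClasses_semidirectProduct_mul_natCard]
  exact (finsum_comp_equiv (symmTraceDualEquiv h2).toEquiv).symm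

theorem natCard_conjClasses_sylow_symplecticGroup [LinearOrder l] [Finite F] (h2 : (2 : F) ≠ 0)
    {p : ℕ} [Fact p.Prime] [CharP F p] (P : Sylow p (Matrix.symplecticGroup l F)) :
    Nat.card (ConjClasses P) * Nat.card (unitriangularGroup F (id : l → l)) =
      ∑ᶠ T : symmMatrices l F,
        Nat.card (ConjClasses (formStabilizer (unitriangularGroup F (id : l → l)) T)) *
          Nat.card (formStabilizer (unitriangularGroup F (id : l → l)) T) := by
  obtain ⟨e⟩ := nonempty_sylow_mulEquiv_symplecticUnitriangular P
  rw [natCard_conjClasses_congr (e.trans siegelEquiv.symm)]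
  exact natCard_conjClasses_siegelGroup_mul_natCard h2 _

end TraceDual

/-! ### Rank three -/

theorem sum_eq_add_card_sub_one_nsmul {α M : Type*} [Fintype α] [AddCommMonoid M] {f : α → M}
    {a : α} {m : M} (hf : ∀ x ≠ a, f x = m) : ∑ x, f x = f a + (Nat.card α - 1) • m := by
  classical
  rw [Fintype.sum_eq_add_sum_compl a,
    Finset.sum_eq_card_nsmul (b := m) fun x hx => hf x (by simpa using hx), Finset.card_compl,
    Finset.card_singleton, Nat.card_eq_fintype_card]

section HeisenbergGroup

variable {R : Type*} [CommRing R]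

/-- The group of unitriangular `3 × 3` matrices. -/
abbrev heisenbergGroup (R : Type*) [CommRing R] : Subgroup (GL (Fin 3) R) :=
  unitriangularGroup R id

theorem isUnitriangular_fin_three_iff {M : Matrix (Fin 3) (Fin 3) R} :
    IsUnitriangular id M ↔ M = !![1, M 0 1, M 0 2; 0, 1, M 1 2; 0, 0, 1] := by
  constructor
  · intro hM
    have hle (i j : Fin 3) (hij : j ≤ i) : M i j = (1 : Matrix (Fin 3) (Fin 3) R) i j := hM hij
    conv_lhs => rw [Matrix.eta_fin_three M, hle 0 0 le_rfl, hle 1 0 (by decide),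
      hle 1 1 le_rfl, hle 2 0 (by decide), hle 2 1 (by decide), hle 2 2 le_rfl]
    simp
  · intro hM i j hij
    rw [hM]
    revert i j
    simp [Fin.forall_fin_succ]

/-- The coordinates `(x, y, z)` of the matrix `[[1, x, z], [0, 1, y], [0, 0, 1]]`. -/
def heisenbergEquiv : R × R × R ≃ heisenbergGroup R where
  toFun g :=
    ⟨⟨!![1, g.1, g.2.2; 0, 1, g.2.1; 0, 0, 1],
      !![1, -g.1, g.1 * g.2.1 - g.2.2; 0, 1, -g.2.1; 0, 0, 1],
      by rw [Matrix.mul_fin_three, Matrix.one_fin_three]; ring_nf,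
      by rw [Matrix.mul_fin_three, Matrix.one_fin_three]; ring_nf⟩,
      isUnitriangular_fin_three_iff.2 rfl⟩
  invFun A := (A.val.val 0 1, A.val.val 1 2, A.val.val 0 2)
  left_inv _ := rfl
  right_inv A := Subtype.ext <| Units.ext (isUnitriangular_fin_three_iff.1 A.2).symm

@[simp]
theorem coe_heisenbergEquiv_apply (g : R × R × R) :
    ((heisenbergEquiv g).val : Matrix (Fin 3) (Fin 3) R) =
      !![1, g.1, g.2.2; 0, 1, g.2.1; 0, 0, 1] :=
  rfl

theorem natCard_heisenbergGroup : Nat.card (heisenbergGroup R) = Nat.card R ^ 3 := by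
  rw [← Nat.card_congr heisenbergEquiv, Nat.card_prod, Nat.card_prod]
  ring

theorem commute_heisenbergEquiv_iff {g h : R × R × R} :
    Commute (heisenbergEquiv g) (heisenbergEquiv h) ↔ g.1 * h.2.1 = h.1 * g.2.1 := by
  rw [commute_iff_eq, Subtype.ext_iff, Units.ext_iff]
  simp only [Subgroup.coe_mul, Units.val_mul, coe_heisenbergEquiv_apply, Matrix.mul_fin_three]
  suffices g.2.2 + (h.2.2 + g.1 * h.2.1) = h.2.2 + (g.2.2 + h.1 * g.2.1) ↔
      g.1 * h.2.1 = h.1 * g.2.1 by simpa [add_comm]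
  rw [add_left_comm, add_right_inj, add_right_inj]

theorem natCard_conjClasses_mul_natCard_of_range {α : Type*} {S : Subgroup (heisenbergGroup R)}
    {γ : α → R × R × R} (hγ : Function.Injective γ)
    (hS : ∀ g, heisenbergEquiv g ∈ S ↔ g ∈ Set.range γ)
    (hcomm : ∀ i j, (γ i).1 * (γ j).2.1 = (γ j).1 * (γ i).2.1) :
    Nat.card (ConjClasses S) * Nat.card S = Nat.card α ^ 2 := by
  have hcard : Nat.card S = Nat.card α :=
    Nat.card_congr <| (heisenbergEquiv.subtypeEquiv fun g => (hS g).symm).symm.trans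
      (Equiv.ofInjective γ hγ).symm
  rw [natCard_conjClasses_mul_natCard_of_commute, hcard]
  intro g h
  obtain ⟨g', hg'⟩ := heisenbergEquiv.surjective g.val
  obtain ⟨h', hh'⟩ := heisenbergEquiv.surjective h.val
  obtain ⟨i, rfl⟩ := (hS g').1 (hg' ▸ g.2)
  obtain ⟨j, rfl⟩ := (hS h').1 (hh' ▸ h.2)
  have hgh : Commute g.val h.val := by
    rw [← hg', ← hh', commute_heisenbergEquiv_iff]
    exact hcomm i j
  exact Subtype.ext hgh

theorem natCard_conjClasses_mul_natCard_of_forall_eq_zero {S : Subgroup (heisenbergGroup R)}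
    (hS : ∀ g, heisenbergEquiv g ∈ S → g = 0) :
    Nat.card (ConjClasses S) * Nat.card S = 1 := by
  have hS' (A : S) : A.val = heisenbergEquiv 0 := by
    rw [← hS (heisenbergEquiv.symm A.val) (by simp), Equiv.apply_symm_apply]
  have : Subsingleton S := ⟨fun A B => Subtype.ext ((hS' A).trans (hS' B).symm)⟩
  rw [natCard_conjClasses_mul_natCard_of_commute fun _ _ => Subsingleton.elim _ _, Nat.card_unique,
    one_pow]

/-- Commuting pairs in the Heisenberg group, in terms of their images in the abelianization. -/
def heisenbergCommutingPairsEquiv :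
    {p : heisenbergGroup R × heisenbergGroup R // Commute p.1 p.2} ≃
      (Σ u : R × R, {w : R × R // u.1 * w.2 = w.1 * u.2}) × (R × R) where
  toFun p := (⟨((heisenbergEquiv.symm p.1.1).1, (heisenbergEquiv.symm p.1.1).2.1),
    ((heisenbergEquiv.symm p.1.2).1, (heisenbergEquiv.symm p.1.2).2.1), by
      simpa only [← commute_heisenbergEquiv_iff, Equiv.apply_symm_apply] using p.2⟩,
    (heisenbergEquiv.symm p.1.1).2.2, (heisenbergEquiv.symm p.1.2).2.2)
  invFun s := ⟨(heisenbergEquiv (s.1.1.1, s.1.1.2, s.2.1),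
    heisenbergEquiv (s.1.2.1.1, s.1.2.1.2, s.2.2)), commute_heisenbergEquiv_iff.2 s.1.2.2⟩
  left_inv p := by simp
  right_inv _ := rfl

end HeisenbergGroup

/-- The coordinates of the symmetric matrix `[[a, b, c], [b, d, e], [c, e, f]]`. -/
def symmMatricesFinThreeEquiv {R : Type*} [CommRing R] :
    R × R × R × (R × R) × R ≃ symmMatrices (Fin 3) R where
  toFun t := ⟨!![t.1, t.2.1, t.2.2.1; t.2.1, t.2.2.2.1.1, t.2.2.2.1.2;
      t.2.2.1, t.2.2.2.1.2, t.2.2.2.2],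
    Matrix.IsSymm.ext fun i j => by fin_cases i <;> fin_cases j <;> rfl⟩
  invFun T := (T.val 0 0, T.val 0 1, T.val 0 2, (T.val 1 1, T.val 1 2), T.val 2 2)
  left_inv _ := rfl
  right_inv T := Subtype.ext <| Matrix.ext fun i j => by
    have hT := T.2.apply
    fin_cases i <;> fin_cases j <;> first | rfl | exact hT _ _

@[simp]
theorem coe_symmMatricesFinThreeEquiv_apply {R : Type*} [CommRing R] (a b c d e f : R) :
    (symmMatricesFinThreeEquiv (a, b, c, (d, e), f) : Matrix (Fin 3) (Fin 3) R) =
      !![a, b, c; b, d, e; c, e, f] :=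
  rfl

section RankThree

variable {F : Type*} [Field F]

/-- The isotropy group in the Heisenberg group of the symmetric matrix with the given
coordinates. -/
abbrev heisenbergIsotropy (a b c : F) (s : F × F) (f : F) : Subgroup (heisenbergGroup F) :=
  formStabilizer (heisenbergGroup F) (symmMatricesFinThreeEquiv (a, b, c, s, f))

theorem heisenbergEquiv_mem_heisenbergIsotropy_iff (h2 : (2 : F) ≠ 0) {a b c f : F} {s : F × F}
    {g : F × F × F} :
    heisenbergEquiv g ∈ heisenbergIsotropy a b c s f ↔
      g.1 * a = 0 ∧ g.1 * b = 0 ∧ g.2.1 * b + g.2.2 * a = 0 ∧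
        g.1 * c + g.2.1 * s.1 + g.2.2 * b = 0 ∧
        2 * (g.2.2 * c + g.2.1 * s.2) = g.1 * g.2.1 * c := by
  obtain ⟨x, y, z⟩ := g
  obtain ⟨d, e⟩ := s
  have hT : (!![1, x, z; 0, 1, y; 0, 0, 1] : Matrix (Fin 3) (Fin 3) F).transpose =
      !![1, 0, 0; x, 1, 0; z, y, 1] := by
    ext i j; fin_cases i <;> fin_cases j <;> rfl
  rw [mem_formStabilizer_iff h2, coe_heisenbergEquiv_apply, coe_symmMatricesFinThreeEquiv_apply,
    hT, Matrix.mul_fin_three, Matrix.mul_fin_three]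
  simp only [EmbeddingLike.apply_eq_iff_eq, Matrix.vecCons_inj, one_mul, zero_mul, mul_one,
    mul_zero, add_zero, and_true, true_and]
  constructor
  · rintro ⟨⟨h01, h02⟩, ⟨-, h11, h12⟩, -, -, h22⟩
    have hxa : x * a = 0 := by linear_combination h01
    have hxb : x * b = 0 := mul_left_cancel₀ h2 (by linear_combination h11 - x * hxa)
    have hyz : y * b + z * a = 0 := by linear_combination h02
    have hx : x * c + y * d + z * b = 0 := by linear_combination h12 - z * hxa - y * hxb
    exact ⟨hxa, hxb, hyz, hx, by linear_combination h22 - z * hyz - y * hx⟩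
  · rintro ⟨hxa, hxb, hyz, hx, hz⟩
    refine ⟨⟨?_, ?_⟩, ⟨?_, ?_, ?_⟩, ?_, ?_, ?_⟩
    · linear_combination hxa
    · linear_combination hyz
    · linear_combination hxa
    · linear_combination 2 * hxb + x * hxa
    · linear_combination hx + z * hxa + y * hxb
    · linear_combination hyz
    · linear_combination hx + x * hyz
    · linear_combination hz + z * hyz + y * hx

theorem natCard_mul_eq_mul_of_ne_zero [Finite F] {u : F × F} (hu : u ≠ 0) :
    Nat.card {w : F × F // u.1 * w.2 = w.1 * u.2} = Nat.card F := by
  let φ : Module.Dual F (F × F) := u.1 • LinearMap.snd F F F - u.2 • LinearMap.fst F F F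
  have hφ : φ ≠ 0 := by
    intro h
    have hfst : φ (1, 0) = 0 := by rw [h, LinearMap.zero_apply]
    have hsnd : φ (0, 1) = 0 := by rw [h, LinearMap.zero_apply]
    exact hu (Prod.ext (by simpa [φ] using hsnd) (by simpa [φ] using hfst))
  have hrank := Module.Dual.finrank_ker_add_one_of_ne_zero hφ
  have hker : Nat.card {w : F × F // u.1 * w.2 = w.1 * u.2} = Nat.card (LinearMap.ker φ) :=
    Nat.card_congr <| Equiv.subtypeEquivRight fun w => by
      simp [φ, sub_eq_zero, mul_comm w.1]
  rw [Module.finrank_prod, Module.finrank_self, add_left_inj] at hrank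
  rw [hker, Module.natCard_eq_pow_finrank (K := F), hrank, pow_one]

theorem natCard_conjClasses_heisenbergGroup_mul_natCard [Finite F] :
    Nat.card (ConjClasses (heisenbergGroup F)) * Nat.card (heisenbergGroup F) =
      (Nat.card F ^ 2 + (Nat.card F ^ 2 - 1) * Nat.card F) * Nat.card F ^ 2 := by
  have := Fintype.ofFinite F
  rw [← card_comm_eq_card_conjClasses_mul_card, Nat.card_congr heisenbergCommutingPairsEquiv,
    Nat.card_prod, Nat.card_prod, Nat.card_sigma,
    sum_eq_add_card_sub_one_nsmul (a := 0) fun u hu => natCard_mul_eq_mul_of_ne_zero hu]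
  simp [sq]

/-- The number of commuting pairs in the isotropy group of the symmetric matrix with the given
coordinates, written as class number times order. -/
noncomputable def isotropyCommCard (a b c : F) (s : F × F) (f : F) : ℕ :=
  Nat.card (ConjClasses (heisenbergIsotropy a b c s f)) * Nat.card (heisenbergIsotropy a b c s f)

theorem isotropyCommCard_of_ne_zero (h2 : (2 : F) ≠ 0) {a : F} (ha : a ≠ 0) {b c f : F} :
    isotropyCommCard a b c (b ^ 2 / a, b * c / a) f = Nat.card F ^ 2 := by
  refine natCard_conjClasses_mul_natCard_of_range (γ := fun y => (0, y, -(y * b / a)))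
    (fun y y' h => congrArg (fun g => g.2.1) h) ?_ (by simp)
  rintro ⟨x, y, z⟩
  rw [heisenbergEquiv_mem_heisenbergIsotropy_iff h2]
  simp only [Set.mem_range, Prod.mk.injEq]
  constructor
  · rintro ⟨hx, -, hz, -⟩
    refine ⟨y, (mul_eq_zero_iff_right ha).1 hx |>.symm, rfl, ?_⟩
    field_simp
    linear_combination -hz
  · rintro ⟨y, rfl, rfl, rfl⟩
    refine ⟨?_, ?_, ?_, ?_, ?_⟩ <;> field_simp <;> ring

theorem isotropyCommCard_of_ne_zero_of_ne (h2 : (2 : F) ≠ 0) {a : F} (ha : a ≠ 0) {b c f : F}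
    {s : F × F} (hs : s ≠ (b ^ 2 / a, b * c / a)) : isotropyCommCard a b c s f = 1 := by
  obtain ⟨d, e⟩ := s
  refine natCard_conjClasses_mul_natCard_of_forall_eq_zero ?_
  rintro ⟨x, y, z⟩ hg
  rw [heisenbergEquiv_mem_heisenbergIsotropy_iff h2] at hg
  obtain ⟨hxa, -, hyz, hx, hz⟩ := hg
  obtain rfl : x = 0 := (mul_eq_zero_iff_right ha).1 hxa
  have hd : y * (d * a - b ^ 2) = 0 := by linear_combination a * hx - b * hyz
  have he : y * (e * a - b * c) = 0 :=
    mul_left_cancel₀ h2 (by linear_combination a * hz - 2 * c * hyz)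
  have hy : y = 0 := by
    by_contra hy
    refine hs (Prod.ext ((eq_div_iff ha).2 ?_) ((eq_div_iff ha).2 ?_))
    · exact sub_eq_zero.1 ((mul_eq_zero_iff_left hy).1 hd)
    · exact sub_eq_zero.1 ((mul_eq_zero_iff_left hy).1 he)
  subst hy
  rw [zero_mul, zero_add, mul_eq_zero_iff_right ha] at hyz
  exact Prod.ext rfl (Prod.ext rfl hyz)

theorem isotropyCommCard_zero_of_ne_zero (h2 : (2 : F) ≠ 0) {b : F} (hb : b ≠ 0) {c f : F}
    {s : F × F} : isotropyCommCard 0 b c s f = 1 := by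
  refine natCard_conjClasses_mul_natCard_of_forall_eq_zero ?_
  rintro ⟨x, y, z⟩ hg
  rw [heisenbergEquiv_mem_heisenbergIsotropy_iff h2] at hg
  obtain ⟨-, hxb, hyb, hz, -⟩ := hg
  obtain rfl : x = 0 := (mul_eq_zero_iff_right hb).1 hxb
  rw [mul_zero, add_zero, mul_eq_zero_iff_right hb] at hyb
  subst hyb
  rw [zero_mul, zero_mul, zero_add, zero_add, mul_eq_zero_iff_right hb] at hz
  exact Prod.ext rfl (Prod.ext rfl hz)

theorem isotropyCommCard_zero_zero_of_ne_zero (h2 : (2 : F) ≠ 0) {c : F} (hc : c ≠ 0) {f : F}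
    {s : F × F} : isotropyCommCard 0 0 c s f = Nat.card F ^ 2 := by
  refine natCard_conjClasses_mul_natCard_of_range
    (γ := fun y => (-(y * s.1 / c), y, -(y * s.2 / c + y ^ 2 * s.1 / (2 * c))))
    (fun y y' h => congrArg (fun g => g.2.1) h) ?_ fun i j => by ring
  rintro ⟨x, y, z⟩
  rw [heisenbergEquiv_mem_heisenbergIsotropy_iff h2]
  simp only [Set.mem_range, Prod.mk.injEq]
  constructor
  · rintro ⟨-, -, -, hx, hz⟩
    refine ⟨y, ?_, rfl, ?_⟩
    · field_simp
      linear_combination -hx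
    · field_simp
      linear_combination -hz - y * hx
  · rintro ⟨y, rfl, rfl, rfl⟩
    refine ⟨?_, ?_, ?_, ?_, ?_⟩ <;> field_simp <;> ring

theorem isotropyCommCard_zero_zero_zero_of_ne_zero (h2 : (2 : F) ≠ 0) {s : F × F} (hs : s ≠ 0)
    {f : F} : isotropyCommCard 0 0 0 s f = Nat.card F ^ 4 := by
  have hsq : Nat.card (F × F) ^ 2 = Nat.card F ^ 4 := by rw [Nat.card_prod]; ring
  rw [← hsq]
  refine natCard_conjClasses_mul_natCard_of_range (γ := fun g => (g.1, 0, g.2)) ?_ ?_ (by simp)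
  · rintro ⟨x, z⟩ ⟨x', z'⟩ h
    simpa using h
  rintro ⟨x, y, z⟩
  have hmem : heisenbergEquiv (x, y, z) ∈ heisenbergIsotropy 0 0 0 s f ↔ y = 0 := by
    rw [heisenbergEquiv_mem_heisenbergIsotropy_iff h2]
    have hs' : y * s.1 = 0 ∧ y * s.2 = 0 ↔ y = 0 := by
      rw [mul_eq_zero, mul_eq_zero, ← or_and_left, or_iff_left]
      exact fun h => hs (Prod.ext h.1 h.2)
    simpa [h2] using hs'
  rw [hmem]
  simp [eq_comm]

theorem isotropyCommCard_zero_zero_zero_zero [Finite F] (h2 : (2 : F) ≠ 0) {f : F} :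
    isotropyCommCard 0 0 0 0 f =
      (Nat.card F ^ 2 + (Nat.card F ^ 2 - 1) * Nat.card F) * Nat.card F ^ 2 := by
  have htop : heisenbergIsotropy 0 0 0 0 f = ⊤ := by
    refine (Subgroup.eq_top_iff' _).2 fun A => ?_
    obtain ⟨g, rfl⟩ := heisenbergEquiv.surjective A
    rw [heisenbergEquiv_mem_heisenbergIsotropy_iff h2]
    simp
  rw [isotropyCommCard, htop, natCard_conjClasses_congr Subgroup.topEquiv, Subgroup.card_top]
  exact natCard_conjClasses_heisenbergGroup_mul_natCard

section Fintype

variable [Fintype F]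

theorem sum_isotropyCommCard_of_ne_zero (h2 : (2 : F) ≠ 0) {a : F} (ha : a ≠ 0) :
    ∑ b, ∑ c, ∑ s, ∑ f, isotropyCommCard a b c s f =
      Nat.card F ^ 3 * (Nat.card F ^ 2 + (Nat.card F ^ 2 - 1)) := by
  have hsum (b c : F) : ∑ s, ∑ f, isotropyCommCard a b c s f =
      Nat.card F ^ 3 + (Nat.card F ^ 2 - 1) * Nat.card F := by
    rw [sum_eq_add_card_sub_one_nsmul (a := (b ^ 2 / a, b * c / a)) (m := Nat.card F)]
    · simp only [isotropyCommCard_of_ne_zero h2 ha, Finset.sum_const, Finset.card_univ,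
        ← Nat.card_eq_fintype_card, Nat.card_prod, ← sq, smul_eq_mul]
      ring
    · intro s hs
      simp [isotropyCommCard_of_ne_zero_of_ne h2 ha hs]
  simp only [hsum, Finset.sum_const, Finset.card_univ, ← Nat.card_eq_fintype_card, smul_eq_mul]
  ring

theorem sum_isotropyCommCard_zero_of_ne_zero (h2 : (2 : F) ≠ 0) {b : F} (hb : b ≠ 0) :
    ∑ c, ∑ s, ∑ f, isotropyCommCard 0 b c s f = Nat.card F ^ 4 := by
  simp only [isotropyCommCard_zero_of_ne_zero h2 hb, Finset.sum_const, Finset.card_univ,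
    ← Nat.card_eq_fintype_card, Nat.card_prod, smul_eq_mul]
  ring

theorem sum_isotropyCommCard_zero_zero_of_ne_zero (h2 : (2 : F) ≠ 0) {c : F} (hc : c ≠ 0) :
    ∑ s, ∑ f, isotropyCommCard 0 0 c s f = Nat.card F ^ 5 := by
  simp only [isotropyCommCard_zero_zero_of_ne_zero h2 hc, Finset.sum_const, Finset.card_univ,
    ← Nat.card_eq_fintype_card, Nat.card_prod, smul_eq_mul]
  ring

theorem sum_isotropyCommCard_zero_zero_zero (h2 : (2 : F) ≠ 0) :
    ∑ s : F × F, ∑ f, isotropyCommCard 0 0 0 s f = Nat.card F ^ 5 * (Nat.card F ^ 2 - 1) +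
      Nat.card F ^ 3 * (Nat.card F ^ 2 + (Nat.card F ^ 2 - 1) * Nat.card F) := by
  rw [sum_eq_add_card_sub_one_nsmul (a := 0) (m := Nat.card F ^ 5)]
  · simp only [isotropyCommCard_zero_zero_zero_zero h2, Finset.sum_const, Finset.card_univ,
      ← Nat.card_eq_fintype_card, Nat.card_prod, ← sq, smul_eq_mul]
    ring
  · intro s hs
    simp [isotropyCommCard_zero_zero_zero_of_ne_zero h2 hs, pow_succ']

theorem sum_isotropyCommCard (h2 : (2 : F) ≠ 0) {v : ℕ} (hv : Nat.card F = v + 1) :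
    ∑ a : F, ∑ b, ∑ c, ∑ s, ∑ f, isotropyCommCard a b c s f =
      (v ^ 4 + 8 * v ^ 3 + 16 * v ^ 2 + 9 * v + 1) * Nat.card F ^ 3 := by
  have hsq : Nat.card F ^ 2 - 1 = v * (v + 2) :=
    Nat.sub_eq_of_eq_add (by rw [hv]; ring)
  rw [sum_eq_add_card_sub_one_nsmul (a := (0 : F)) fun a ha =>
      sum_isotropyCommCard_of_ne_zero h2 ha,
    sum_eq_add_card_sub_one_nsmul (a := (0 : F)) fun b hb =>
      sum_isotropyCommCard_zero_of_ne_zero h2 hb,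
    sum_eq_add_card_sub_one_nsmul (a := (0 : F)) fun c hc =>
      sum_isotropyCommCard_zero_zero_of_ne_zero h2 hc,
    sum_isotropyCommCard_zero_zero_zero h2, hsq]
  simp only [smul_eq_mul, hv, add_tsub_cancel_right]
  ring

theorem finsum_formStabilizer_heisenbergGroup :
    ∑ᶠ T : symmMatrices (Fin 3) F, Nat.card (ConjClasses (formStabilizer (heisenbergGroup F) T)) *
      Nat.card (formStabilizer (heisenbergGroup F) T) =
    ∑ a : F, ∑ b, ∑ c, ∑ s, ∑ f, isotropyCommCard a b c s f := by
  rw [← finsum_comp_equiv symmMatricesFinThreeEquiv, finsum_eq_sum_of_fintype]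
  simp only [Fintype.sum_prod_type]
  rfl

end Fintype

end RankThree

/-- The number of conjugacy classes of a Sylow `p`-subgroup of `Sp_6(F_q)`,
for `p` an odd prime and `q` a power of `p`, written in `v = q - 1`. -/
theorem card_conjClasses_sylow_sp6 (p q : ℕ) (hp : p.Prime) (hodd : Odd p)
    (hq : ∃ n : ℕ, 0 < n ∧ q = p ^ n)
    (F : Type*) [Field F] [Fintype F] (hF : Fintype.card F = q)
    (P : Sylow p (Matrix.symplecticGroup (Fin 3) F)) (v : ℕ) (hv : v = q - 1) :
    Nat.card (ConjClasses (P : Subgroup (Matrix.symplecticGroup (Fin 3) F))) =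
      v ^ 4 + 8 * v ^ 3 + 16 * v ^ 2 + 9 * v + 1 := by
  have : Fact p.Prime := ⟨hp⟩
  obtain ⟨n, -, hqn⟩ := hq
  have : CharP F p := charP_of_card_eq_prime_pow (hF.trans hqn)
  have h2 : (2 : F) ≠ 0 := Ring.two_ne_zero <| by
    rw [ringChar.eq F p]
    rintro rfl
    exact absurd hodd (by decide)
  have hcard : Nat.card F = v + 1 := by
    have hpos : 0 < Fintype.card F := Fintype.card_pos
    rw [Nat.card_eq_fintype_card]
    lia
  have hsum := natCard_conjClasses_sylow_symplecticGroup h2 P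
  rw [finsum_formStabilizer_heisenbergGroup, sum_isotropyCommCard h2 hcard,
    natCard_heisenbergGroup] at hsum
  exact Nat.eq_of_mul_eq_mul_right (pow_pos Nat.card_pos 3) hsum
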